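/- Let H be a connected graded k-Hopf algebra with antipode S, and let S² = S ∘ S. Assume that ab = ba for every a, b ∈ H_1. Then: (a) (id − S²)(H_2) = 0; (b) for any integer u > 2, we have (id − S²)^{u−2}(H_{≤u}) ⊆ Prim H and ((id + S) ∘ (id − S²)^{u−2})(H_{≤u}) = 0; (c) for any integer u > 1, we have (id − S²)^{u−1}(H_{≤u}) = 0. Here H_{≤u} = ⊕_{i=0}^{u} H_i, and powers denote composition powers. -/

import Mathlib

/-!
Write `D = id - S²`. Since `S` is an anti-endomorphism of the coalgebra `H`, its square is a
coalgebra endomorphism, whence `Δ ∘ D = (D ⊗ id + S² ⊗ D) ∘ Δ` (`comul_one_sub_sq_pow`). The two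
summands commute, so `Δ ∘ D ^ n` is a binomial sum of the operators `D ^ p S² ^ q ⊗ D ^ q` with
`p + q = n`, applied to `Δ`.

`D` kills primitive elements, because `S x = -x` for them (`antipode_of_mem_primitives`); hence it
kills degree `1`. It kills degree `0` because `S 1 = 1`, and degree `2` because degree-one elements commute
(`one_sub_sq_of_mem_two`). Strong induction on `n ≥ 3` then shows that `D ^ (n - 2)` maps `G n` to
primitive elements: by counting exponents, every term of the binomial sum vanishes on the middle
components `G i ⊗ G (n - i)`, `0 < i < n`, of `Δ x` (`one_sub_sq_pow_mem_primitives`). One more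
factor `D` gives `0`, which closes the induction.
-/

open TensorProduct

/-- The image of `A ⊗ B` under the canonical map `A ⊗ B → H ⊗ H` obtained by tensoring
the inclusion maps. -/
noncomputable def tmulImage {k H : Type*} [CommRing k] [AddCommGroup H] [Module k H]
    (A B : Submodule k H) : Submodule k (H ⊗[k] H) :=
  LinearMap.range (TensorProduct.mapIncl A B)

/-- The submodule of primitive elements of `H` (with respect to the unity `one`):
those `x` with `Δ x = x ⊗ one + one ⊗ x`. -/
noncomputable def primitives (k : Type*) (H : Type*) [CommRing k] [AddCommGroup H]
    [Module k H] [Coalgebra k H] (one : H) : Submodule k H :=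
  LinearMap.ker (Coalgebra.comul (R := k) - (TensorProduct.mk k H H).flip one
    - TensorProduct.mk k H H one)

/-! ### The square of the antipode is a coalgebra endomorphism -/

section Antipode

open Coalgebra WithConv

variable {k H : Type*} [CommRing k] [Ring H] [HopfAlgebra k H]

/-- The antipode is a coalgebra anti-endomorphism. In the convolution algebra `Hom(H, H ⊗ H)`,
with `i₁ x = x ⊗ 1` and `i₂ x = 1 ⊗ x`, the comultiplication is `i₁ * i₂`, and the right-hand side
is `(i₂ ∘ S) * (i₁ ∘ S)`, a left inverse of it; `Δ ∘ S` is a right inverse. -/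
lemma comul_comp_antipode :
    comul ∘ₗ HopfAlgebra.antipode k (A := H) =
      TensorProduct.map (HopfAlgebra.antipode k) (HopfAlgebra.antipode k) ∘ₗ
        (TensorProduct.comm k H H).toLinearMap ∘ₗ comul := by
  let i₁ : H →ₐ[k] H ⊗[k] H := Algebra.TensorProduct.includeLeft
  let i₂ : H →ₐ[k] H ⊗[k] H := Algebra.TensorProduct.includeRight
  let S : H →ₗ[k] H := HopfAlgebra.antipode k
  have inv (i : H →ₐ[k] H ⊗[k] H) :
      toConv (i.toLinearMap ∘ₗ S) * toConv i.toLinearMap = 1 := by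
    have h := LinearMap.algHom_comp_convMul_distrib i (toConv S) (toConv LinearMap.id)
    rw [LinearMap.antipode_mul_id] at h
    apply WithConv.ext
    refine Eq.trans h.symm ?_
    ext x
    simp [LinearMap.convOne_def]
  have hδ : (toConv comul : WithConv (H →ₗ[k] H ⊗[k] H)) =
      toConv i₁.toLinearMap * toConv i₂.toLinearMap := by
    ext x
    rw [(ℛ k x).convMul_apply]
    simp [i₁, i₂, (ℛ k x).eq]
  have hG : (toConv (TensorProduct.map S S ∘ₗ
        (TensorProduct.comm k H H).toLinearMap ∘ₗ comul) : WithConv (H →ₗ[k] H ⊗[k] H)) =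
      toConv (i₂.toLinearMap ∘ₗ S) * toConv (i₁.toLinearMap ∘ₗ S) := by
    ext x
    rw [(ℛ k x).convMul_apply]
    simp only [LinearMap.comp_apply, ← (ℛ k x).eq]
    simp [i₁, i₂]
  apply WithConv.toConv_injective
  refine (left_inv_eq_right_inv
    (a := (toConv comul : WithConv (H →ₗ[k] H ⊗[k] H))) ?_ LinearMap.comul_right_inv).symm
  rw [show HopfAlgebra.antipode k = S from rfl, hG, hδ, ← mul_assoc,
    mul_assoc (toConv (i₂.toLinearMap ∘ₗ S)), inv, mul_one, inv]

lemma comul_antipode_sq (x : H) :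
    comul (R := k) ((HopfAlgebra.antipode k ^ 2 : Module.End k H) x) =
      TensorProduct.map (HopfAlgebra.antipode k ^ 2 : Module.End k H)
        (HopfAlgebra.antipode k ^ 2 : Module.End k H) (comul x) := by
  have h (y : H) := LinearMap.congr_fun (comul_comp_antipode (k := k) (H := H)) y
  simp only [LinearMap.comp_apply, LinearEquiv.coe_coe] at h
  rw [pow_two, Module.End.mul_apply, h, h]
  induction comul (R := k) x using TensorProduct.induction_on with
  | zero => simp
  | tmul a b => simp
  | add a b ha hb => simp only [map_add, ha, hb]

/-- The twisted Leibniz rule `Δ ∘ D = (D ⊗ id + S² ⊗ D) ∘ Δ` for `D = id - S²`, iterated. -/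
lemma comul_one_sub_sq_pow (S : Module.End k H) (hS : S = HopfAlgebra.antipode k) (n : ℕ) (x : H) :
    comul (R := k) (((1 - S ^ 2) ^ n : Module.End k H) x) =
      ((TensorProduct.map (1 - S ^ 2) 1 + TensorProduct.map (S ^ 2) (1 - S ^ 2) :
        Module.End k (H ⊗[k] H)) ^ n) (comul x) := by
  induction n with
  | zero => simp
  | succ n ih =>
    rw [pow_succ' (1 - S ^ 2) n, pow_succ' (_ + _) n, Module.End.mul_apply, Module.End.mul_apply,
      ← ih]
    generalize ((1 - S ^ 2) ^ n : Module.End k H) x = y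
    rw [LinearMap.sub_apply, map_sub, hS, comul_antipode_sq]
    induction comul (R := k) y using TensorProduct.induction_on with
    | zero => simp
    | tmul a b => simp [TensorProduct.sub_tmul, TensorProduct.tmul_sub]
    | add a b ha hb => simp only [map_add, add_sub_add_comm] at ha hb ⊢; rw [ha, hb]

lemma mem_primitives_iff (x : H) :
    x ∈ primitives k H 1 ↔ comul (R := k) x = x ⊗ₜ 1 + 1 ⊗ₜ x := by
  simp [primitives, LinearMap.mem_ker, sub_sub, sub_eq_zero]

lemma antipode_of_mem_primitives (x : H) (hx : x ∈ primitives k H 1) :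
    HopfAlgebra.antipode k x = -x := by
  rw [mem_primitives_iff] at hx
  -- Applying `ε ⊗ id` to the comultiplication shows that `ε(x) · 1 = 0` in `H`.
  have h1 : algebraMap k H (counit x) = 0 := by
    have h := congrArg (TensorProduct.lid k H) (rTensor_counit_comul (R := k) x)
    rw [hx] at h
    simpa [Algebra.algebraMap_eq_smul_one] using h
  have h2 := HopfAlgebra.mul_antipode_rTensor_comul_apply (R := k) x
  rw [hx, h1] at h2
  simp at h2
  exact eq_neg_of_add_eq_zero_left h2

end Antipode

/-! ### Consequences of the grading -/

section Graded

open Coalgebra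

variable {k H : Type*} [CommRing k]

lemma submodule_sum_le {M ι : Type*} [AddCommGroup M] [Module k M] (s : Finset ι)
    (A : ι → Submodule k M) (B : Submodule k M) (h : ∀ i ∈ s, A i ≤ B) : ∑ i ∈ s, A i ≤ B :=
  Finset.sum_induction A (· ≤ B) (fun a b ha hb => by rw [Submodule.add_eq_sup]; exact sup_le ha hb)
    (by simp) h

lemma tmulImage_le [AddCommGroup H] [Module k H] (A B : Submodule k H)
    (K : Submodule k (H ⊗[k] H)) (h : ∀ a ∈ A, ∀ b ∈ B, a ⊗ₜ b ∈ K) : tmulImage A B ≤ K := by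
  rintro _ ⟨t, rfl⟩
  induction t using TensorProduct.induction_on with
  | zero => simp
  | tmul a b => simpa [TensorProduct.mapIncl] using h a a.2 b b.2
  | add a b ha hb => rw [map_add]; exact K.add_mem ha hb

variable [Ring H] [HopfAlgebra k H]

lemma eq_smul_one_of_mem_zero (G : ℕ → Submodule k H) (honeG : (1 : H) ∈ G 0)
    (hconn : Function.Bijective fun x : G 0 => counit (R := k) (x : H)) (x : H) (hx : x ∈ G 0) :
    x = counit (R := k) x • (1 : H) := by
  have h : (⟨x, hx⟩ : G 0) = ⟨counit (R := k) x • (1 : H), (G 0).smul_mem _ honeG⟩ :=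
    hconn.1 (by simp)
  exact congrArg Subtype.val h

/-- In positive degree, `Δ x - x ⊗ 1 - 1 ⊗ x` lies in the sum of the `G i ⊗ G j` with both
`i` and `j` positive. -/
lemma comul_eq_of_mem_succ (G : ℕ → Submodule k H) (honeG : (1 : H) ∈ G 0)
    (hcomulG : ∀ n : ℕ, Submodule.map (comul (R := k) (A := H)) (G n) ≤
      ∑ i ∈ Finset.range (n + 1), tmulImage (G i) (G (n - i)))
    (hcounitG : ∀ n : ℕ, 0 < n → ∀ x ∈ G n, counit (R := k) x = 0)
    (hconn : Function.Bijective fun x : G 0 => counit (R := k) (x : H))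
    (m : ℕ) (x : H) (hx : x ∈ G (m + 1)) :
    ∃ z ∈ ∑ i ∈ Finset.range m, tmulImage (G (i + 1)) (G (m - i)),
      comul (R := k) x = x ⊗ₜ 1 + 1 ⊗ₜ x + z := by
  have hz := hcomulG (m + 1) (Submodule.mem_map_of_mem hx)
  rw [Finset.sum_range_succ, Finset.sum_range_succ', Submodule.add_eq_sup, Submodule.add_eq_sup,
    Submodule.mem_sup] at hz
  obtain ⟨w, hw, r, hr, hwr⟩ := hz
  obtain ⟨z, hz, l, hl, hzl⟩ := Submodule.mem_sup.1 hw
  simp only [Nat.add_sub_add_right, Nat.sub_zero, Nat.sub_self] at hz hl hr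
  -- The extreme components have the form `1 ⊗ b` and `a ⊗ 1`, because `G 0 = k · 1`.
  obtain ⟨b, hb, rfl⟩ : l ∈ (G (m + 1)).map (TensorProduct.mk k H H 1) := by
    refine tmulImage_le _ _ _ (fun a ha b hb => Submodule.mem_map.2 ⟨counit (R := k) a • b,
      (G (m + 1)).smul_mem _ hb, ?_⟩) hl
    conv_rhs => rw [eq_smul_one_of_mem_zero G honeG hconn a ha]
    simp [TensorProduct.smul_tmul']
  obtain ⟨a, ha, rfl⟩ : r ∈ (G (m + 1)).map ((TensorProduct.mk k H H).flip 1) := by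
    refine tmulImage_le _ _ _ (fun a ha b hb => Submodule.mem_map.2 ⟨counit (R := k) b • a,
      (G (m + 1)).smul_mem _ ha, ?_⟩) hr
    conv_rhs => rw [eq_smul_one_of_mem_zero G honeG hconn b hb]
    simp [TensorProduct.smul_tmul']
  -- `ε ⊗ id` and `id ⊗ ε` kill the middle component, so the counit axioms identify `a` and `b`.
  have hzr : counit.rTensor H z = (0 : k ⊗[k] H) := by
    refine (submodule_sum_le _ _ (LinearMap.ker (LinearMap.rTensor H (counit (R := k) (A := H))))
      fun i _ => tmulImage_le _ _ _ fun a ha b hb => ?_) hz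
    simp [hcounitG _ i.succ_pos a ha]
  have hzl' : counit.lTensor H z = (0 : H ⊗[k] k) := by
    refine (submodule_sum_le _ _ (LinearMap.ker (LinearMap.lTensor H (counit (R := k) (A := H))))
      fun i hi => tmulImage_le _ _ _ fun a ha b hb => ?_) hz
    simp [hcounitG _ (Nat.sub_pos_of_lt (Finset.mem_range.1 hi)) b hb]
  have hbx : b = x := by
    have h := congrArg (TensorProduct.lid k H) (rTensor_counit_comul (R := k) x)
    rw [← hwr, ← hzl] at h
    simpa [hzr, hcounitG _ m.succ_pos a ha] using h
  have hax : a = x := by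
    have h := congrArg (TensorProduct.rid k H) (lTensor_counit_comul (R := k) x)
    rw [← hwr, ← hzl] at h
    simpa [hzl', hcounitG _ m.succ_pos b hb] using h
  refine ⟨z, hz, ?_⟩
  rw [← hwr, ← hzl, hbx, hax]
  simp only [TensorProduct.mk_apply, LinearMap.flip_apply]
  abel

/-- In degree two, `S x = -x + ∑ a b` when `Δ x = x ⊗ 1 + 1 ⊗ x + ∑ a ⊗ b`, and `S` fixes every
product `a b` because `S (a b) = (S b) (S a) = b a = a b`. -/
lemma one_sub_sq_of_mem_two (G : ℕ → Submodule k H) (honeG : (1 : H) ∈ G 0)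
    (hcomulG : ∀ n : ℕ, Submodule.map (comul (R := k) (A := H)) (G n) ≤
      ∑ i ∈ Finset.range (n + 1), tmulImage (G i) (G (n - i)))
    (hcounitG : ∀ n : ℕ, 0 < n → ∀ x ∈ G n, counit (R := k) x = 0)
    (hconn : Function.Bijective fun x : G 0 => counit (R := k) (x : H))
    (hcommG1 : ∀ a ∈ G 1, ∀ b ∈ G 1, a * b = b * a)
    (S : Module.End k H) (hS : S = HopfAlgebra.antipode k)
    (hS1 : ∀ a ∈ G 1, S a = -a) (x : H) (hx : x ∈ G 2) :
    (1 - S ^ 2 : Module.End k H) x = 0 := by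
  obtain ⟨z, hz, hxz⟩ := comul_eq_of_mem_succ G honeG hcomulG hcounitG hconn 1 x hx
  simp only [Finset.sum_range_one, Nat.sub_zero, zero_add] at hz
  have h1 : LinearMap.mul' k H (S.rTensor H z) = -LinearMap.mul' k H z := by
    have := tmulImage_le (G 1) (G 1)
      (LinearMap.ker (LinearMap.mul' k H ∘ₗ S.rTensor H + LinearMap.mul' k H))
      (fun a ha b hb => by simp [hS1 a ha]) hz
    exact eq_neg_of_add_eq_zero_left (by simpa using this)
  have h2 : S (LinearMap.mul' k H z) = LinearMap.mul' k H z := by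
    have := tmulImage_le (G 1) (G 1)
      (LinearMap.ker (S ∘ₗ LinearMap.mul' k H - LinearMap.mul' k H))
      (fun a ha b hb => by
        have hab : S (a * b) = S b * S a := by rw [hS, HopfAlgebra.antipode_mul_antidistrib]
        simp [hab, hS1 a ha, hS1 b hb, hcommG1 b hb a ha]) hz
    exact sub_eq_zero.1 (by simpa using this)
  have h3 := HopfAlgebra.mul_antipode_rTensor_comul_apply (R := k) x
  have hone : S 1 = 1 := by rw [hS, HopfAlgebra.antipode_one]
  rw [← hS, hxz, hcounitG 2 two_pos x hx] at h3
  simp only [map_add, LinearMap.rTensor_tmul, LinearMap.mul'_apply, h1, hone, mul_one, one_mul,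
    map_zero] at h3
  have h4 : S x = -x + LinearMap.mul' k H z := by
    rw [← sub_eq_zero, ← h3]; abel
  rw [LinearMap.sub_apply, pow_two, Module.End.mul_apply, Module.End.one_apply, h4, map_add,
    map_neg, h2, h4]
  abel

end Graded

/-! ### The iterates of `id - S²` -/

section Iterates

open Coalgebra

variable {k H : Type*} [CommRing k] [Ring H] [HopfAlgebra k H]

/-- If `D ^ max (j - 1) 1` kills `G j` for all `j < m + 1`, where `D = id - S²`, then `D ^ (m - 1)`
maps `G (m + 1)` to primitives. Expand `(D ⊗ id + S² ⊗ D) ^ (m - 1)` binomially: each summand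
`D ^ p S² ^ q ⊗ D ^ q` with `p + q = m - 1` kills every middle component `G i ⊗ G j` of `Δ x`, as
`p < max (i - 1) 1` and `q < max (j - 1) 1` would give `p + q < m - 1` (here `2 ≤ m` is needed to
exclude `i = j = 1`). -/
lemma one_sub_sq_pow_mem_primitives (G : ℕ → Submodule k H) (honeG : (1 : H) ∈ G 0)
    (hcomulG : ∀ n : ℕ, Submodule.map (comul (R := k) (A := H)) (G n) ≤
      ∑ i ∈ Finset.range (n + 1), tmulImage (G i) (G (n - i)))
    (hcounitG : ∀ n : ℕ, 0 < n → ∀ x ∈ G n, counit (R := k) x = 0)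
    (hconn : Function.Bijective fun x : G 0 => counit (R := k) (x : H))
    (S : Module.End k H) (hS : S = HopfAlgebra.antipode k) (m : ℕ) (hm : 2 ≤ m)
    (ih : ∀ j < m + 1, ∀ x ∈ G j, ((1 - S ^ 2) ^ max (j - 1) 1 : Module.End k H) x = 0)
    (x : H) (hx : x ∈ G (m + 1)) :
    ((1 - S ^ 2) ^ (m - 1) : Module.End k H) x ∈ primitives k H 1 := by
  obtain ⟨z, hz, hxz⟩ := comul_eq_of_mem_succ G honeG hcomulG hcounitG hconn m x hx
  have hcom : Commute (TensorProduct.map (1 - S ^ 2) 1 : Module.End k (H ⊗[k] H))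
      (TensorProduct.map (S ^ 2) (1 - S ^ 2)) := by
    have h : Commute (1 - S ^ 2) (S ^ 2) := (Commute.one_left _).sub_left (Commute.refl _)
    rw [Commute, SemiconjBy, ← TensorProduct.map_mul, ← TensorProduct.map_mul, h.eq, one_mul,
      mul_one]
  have hterm (p q : ℕ) (a b : H) :
      ((TensorProduct.map (1 - S ^ 2) 1) ^ p *
        (TensorProduct.map (S ^ 2) (1 - S ^ 2)) ^ q : Module.End k (H ⊗[k] H)) (a ⊗ₜ b) =
      ((S ^ 2) ^ q : Module.End k H) (((1 - S ^ 2) ^ p : Module.End k H) a) ⊗ₜ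
        ((1 - S ^ 2) ^ q : Module.End k H) b := by
    have h : Commute (1 - S ^ 2) (S ^ 2) := (Commute.one_left _).sub_left (Commute.refl _)
    rw [TensorProduct.map_pow, TensorProduct.map_pow, ← TensorProduct.map_mul,
      (h.pow_pow p q).eq, one_pow, one_mul, TensorProduct.map_tmul, Module.End.mul_apply]
  set T : Module.End k (H ⊗[k] H) :=
    TensorProduct.map (1 - S ^ 2) 1 + TensorProduct.map (S ^ 2) (1 - S ^ 2) with hT
  have hone : S 1 = 1 := by rw [hS, HopfAlgebra.antipode_one]
  have hpow_zero (f : Module.End k H) (p q : ℕ) (hpq : p ≤ q) (y : H) (hy : (f ^ p) y = 0) :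
      (f ^ q) y = 0 := by
    rw [← Nat.sub_add_cancel hpq, pow_add, Module.End.mul_apply, hy, map_zero]
  have hzero : (T ^ (m - 1)) z = 0 := by
    refine (submodule_sum_le _ _ (LinearMap.ker (T ^ (m - 1))) fun i hi =>
      tmulImage_le _ _ _ fun a ha b hb => ?_) hz
    have hi' := Finset.mem_range.1 hi
    rw [LinearMap.mem_ker, hT, hcom.add_pow, LinearMap.sum_apply]
    refine Finset.sum_eq_zero fun p hp => ?_
    have hp' := Finset.mem_range.1 hp
    rw [← (Nat.cast_commute _ _).eq, Module.End.mul_apply, hterm]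
    rcases le_or_gt (max (i + 1 - 1) 1) p with hle | hlt
    · rw [hpow_zero _ _ _ hle a (ih _ (by omega) a ha)]
      simp
    · rw [hpow_zero _ _ (m - 1 - p) (by omega) b (ih _ (by omega) b hb)]
      simp
  have hleft (n : ℕ) (y : H) : (T ^ n) (1 ⊗ₜ y) = 1 ⊗ₜ ((1 - S ^ 2) ^ n : Module.End k H) y := by
    induction n with
    | zero => simp
    | succ n ihn =>
      rw [pow_succ', pow_succ', Module.End.mul_apply, Module.End.mul_apply, ihn]
      simp [hT, pow_two S, hone]
  have hright (n : ℕ) (y : H) : (T ^ n) (y ⊗ₜ 1) = ((1 - S ^ 2) ^ n : Module.End k H) y ⊗ₜ 1 := by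
    induction n with
    | zero => simp
    | succ n ihn =>
      rw [pow_succ', pow_succ', Module.End.mul_apply, Module.End.mul_apply, ihn]
      simp [hT, pow_two S, hone]
  rw [mem_primitives_iff, comul_one_sub_sq_pow S hS, hxz, map_add, map_add, hzero, hleft, hright,
    add_zero]

end Iterates

theorem stmt_19 {k H : Type*} [CommRing k] [Ring H] [HopfAlgebra k H]
    (G : ℕ → Submodule k H)
    (hdirect : DirectSum.IsInternal G)
    (hmulG : ∀ i j : ℕ, ∀ a ∈ G i, ∀ b ∈ G j, a * b ∈ G (i + j))
    (honeG : (1 : H) ∈ G 0)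
    (hcomulG : ∀ n : ℕ, Submodule.map (Coalgebra.comul (R := k) (A := H)) (G n) ≤
      ∑ i ∈ Finset.range (n + 1), tmulImage (G i) (G (n - i)))
    (hcounitG : ∀ n : ℕ, 0 < n → ∀ x ∈ G n, Coalgebra.counit (R := k) x = 0)
    (hconn : Function.Bijective fun x : G 0 => Coalgebra.counit (R := k) (x : H))
    (S : Module.End k H) (hS : S = HopfAlgebra.antipode (R := k))
    (hcommG1 : ∀ a ∈ G 1, ∀ b ∈ G 1, a * b = b * a) :
    Submodule.map ((1 - S ^ 2 : Module.End k H) : H →ₗ[k] H) (G 2) = ⊥ ∧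
    (∀ u : ℕ, 2 < u →
      Submodule.map (((1 - S ^ 2) ^ (u - 2) : Module.End k H) : H →ₗ[k] H)
          (∑ i ∈ Finset.range (u + 1), G i) ≤ primitives k H 1 ∧
      Submodule.map (((1 + S) * (1 - S ^ 2) ^ (u - 2) : Module.End k H) : H →ₗ[k] H)
          (∑ i ∈ Finset.range (u + 1), G i) = ⊥) ∧
    (∀ u : ℕ, 1 < u →
      Submodule.map (((1 - S ^ 2) ^ (u - 1) : Module.End k H) : H →ₗ[k] H)
          (∑ i ∈ Finset.range (u + 1), G i) = ⊥) := by
  set D : Module.End k H := 1 - S ^ 2 with hD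
  have hSprim (x : H) (hx : x ∈ primitives k H 1) : S x = -x := by
    rw [hS]; exact antipode_of_mem_primitives x hx
  have hDprim (x : H) (hx : x ∈ primitives k H 1) : D x = 0 := by
    simp [hD, pow_two, hSprim x hx]
  have hS1 (x : H) (hx : x ∈ G 1) : S x = -x := by
    obtain ⟨z, hz, hxz⟩ := comul_eq_of_mem_succ G honeG hcomulG hcounitG hconn 0 x hx
    refine hSprim x ((mem_primitives_iff x).2 ?_)
    simp only [Finset.range_zero, Finset.sum_empty, Submodule.zero_eq_bot, Submodule.mem_bot] at hz
    rw [hxz, hz, add_zero]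
  have hD0 (x : H) (hx : x ∈ G 0) : D x = 0 := by
    have hone : S 1 = 1 := by rw [hS, HopfAlgebra.antipode_one]
    rw [eq_smul_one_of_mem_zero G honeG hconn x hx]
    simp [hD, pow_two, hone]
  have hD1 (x : H) (hx : x ∈ G 1) : D x = 0 := by
    simp [hD, pow_two, hS1 x hx]
  have hD2 (x : H) (hx : x ∈ G 2) : D x = 0 :=
    one_sub_sq_of_mem_two G honeG hcomulG hcounitG hconn hcommG1 S hS hS1 x hx
  have kill (n : ℕ) : ∀ x ∈ G n, (D ^ max (n - 1) 1) x = 0 := by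
    induction n using Nat.strong_induction_on with
    | _ n ih =>
      intro x hx
      match n, ih, hx with
      | 0, _, hx => simpa using hD0 x hx
      | 1, _, hx => simpa using hD1 x hx
      | 2, _, hx => simpa using hD2 x hx
      | m + 3, ih, hx =>
        have h := hDprim _ (one_sub_sq_pow_mem_primitives G honeG hcomulG hcounitG hconn S hS
          (m + 2) (by omega) ih x hx)
        rw [show max (m + 3 - 1) 1 = (m + 2 - 1) + 1 by omega, pow_succ']
        exact h
  have kill_of_le (n e : ℕ) (he : max (n - 1) 1 ≤ e) (x : H) (hx : x ∈ G n) : (D ^ e) x = 0 := by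
    rw [← Nat.sub_add_cancel he, pow_add, Module.End.mul_apply, kill n x hx, map_zero]
  have hprim (u : ℕ) (hu : 2 < u) (x : H) (hx : x ∈ ∑ i ∈ Finset.range (u + 1), G i) :
      (D ^ (u - 2)) x ∈ primitives k H 1 := by
    refine submodule_sum_le _ _ ((primitives k H 1).comap (D ^ (u - 2))) (fun i hi y hy => ?_) hx
    rw [Submodule.mem_comap]
    have hi' := Finset.mem_range.1 hi
    rcases Nat.lt_or_ge i u with hlt | hge
    · rw [kill_of_le i (u - 2) (by omega) y hy]
      exact Submodule.zero_mem _
    · obtain ⟨m, rfl⟩ : ∃ m, u = m + 1 := ⟨u - 1, by omega⟩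
      obtain rfl : i = m + 1 := by omega
      exact one_sub_sq_pow_mem_primitives G honeG hcomulG hcounitG hconn S hS m (by omega)
        (fun j _ => kill j) y hy
  refine ⟨?_, fun u hu => ⟨?_, ?_⟩, fun u hu => ?_⟩
  · rw [← LinearMap.le_ker_iff_map]
    exact fun x hx => hD2 x hx
  · rintro _ ⟨x, hx, rfl⟩
    exact hprim u hu x hx
  · rw [← LinearMap.le_ker_iff_map]
    intro x hx
    rw [LinearMap.mem_ker, Module.End.mul_apply, LinearMap.add_apply, hSprim _ (hprim u hu x hx)]
    simp
  · rw [← LinearMap.le_ker_iff_map]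
    exact submodule_sum_le _ _ _ fun i hi y hy =>
      kill_of_le i (u - 1) (by have := Finset.mem_range.1 hi; omega) y hy
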